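/- Let ε > 0 and let H_ε be the Fourier multiplier on ℝ² with symbol φ_ε(|ξ|) = (|ξ|/ε)√(1+ε²|ξ|²). Then there exists C > 0, independent of ε, t, k and f, such that for every k ∈ ℤ with 2^k ε ≤ 1 and every t > 0, ‖P_{2^k}(e^{itH_ε} f)‖_{L^∞(ℝ²)} ≤ C (t/ε)^{-1/2} 2^{3k/2} ‖P_{2^k} f‖_{L¹(ℝ²)}. -/

import Mathlib

open MeasureTheory Complex
open scoped FourierTransform ENNReal

noncomputable section

/-- Euclidean space `ℝ²`. -/
abbrev E2 := EuclideanSpace ℝ (Fin 2)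

/-- The propagator `e^{itH_ε}` on `ℝ²`, where `H_ε` is the Fourier multiplier with symbol
`φ_ε(|ξ|) = (|ξ|/ε)√(1+ε²|ξ|²)`: `e^{itH_ε} f = 𝓕⁻¹(e^{itφ_ε(|ξ|)} 𝓕f)`. -/
def Heps (ε t : ℝ) (f : E2 → ℂ) : E2 → ℂ :=
  𝓕⁻ fun ξ =>
    Complex.exp (Complex.I * ((t * (‖ξ‖ / ε * Real.sqrt (1 + ε ^ 2 * ‖ξ‖ ^ 2))) : ℝ)) * 𝓕 f ξ

/-- The Littlewood–Paley projection `P_{2^k} g = 𝓕⁻¹(ψ(2^{-k}|ξ|) 𝓕g)`. -/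
def LP (ψ : ℝ → ℝ) (k : ℤ) (g : E2 → ℂ) : E2 → ℂ :=
  𝓕⁻ fun ξ => ((ψ ((2 : ℝ) ^ (-k) * ‖ξ‖) : ℝ) : ℂ) * 𝓕 g ξ

/-!
Localizing the frequency with a smooth cutoff `χ = 1` on the support of `ψ` exhibits
`P_{2^k} e^{itH_ε} f` as the convolution of `P_{2^k} f` with a kernel, so it suffices to bound that
kernel uniformly. Rescaling `|ξ| ∼ 2^k` to `|ξ| ∼ 1` turns its phase into `l r √(1 + (2^k ε)² r²)`
with `l = 2^k t / ε`, and in polar coordinates it becomes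
`∫∫ r χ(r) e^{i(l φ(r) + s r cos θ)} dθ dr` with `s = 2π|x|`. For `s ≤ l / 2` the phase is not
stationary in `r`, since `φ' ≥ 1`, and one integration by parts gains `l⁻¹`; for `s ≥ l / 2` the
angular integral alone is `O(s^{-1/2})`. Both bounds use only `φ' ≥ 1` and `|r φ''| ≤ φ'`, which
hold for every value of `2^k ε`.
-/

section OscillatoryIntegrals

open Set
open scoped Real

theorem norm_integral_mul_deriv_cexp_le {a b : ℝ} (hab : a ≤ b) {w w' Φ Φ' : ℝ → ℝ}
    (hw : ∀ x ∈ Icc a b, HasDerivAt w (w' x) x) (hw' : ContinuousOn w' (Icc a b))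
    (hΦ : ∀ x ∈ Icc a b, HasDerivAt Φ (Φ' x) x) (hΦ' : ContinuousOn Φ' (Icc a b)) :
    ‖∫ x in a..b, ((w x * Φ' x : ℝ) : ℂ) * cexp (I * Φ x)‖ ≤
      |w a| + |w b| + ∫ x in a..b, |w' x| := by
  rw [← uIcc_of_le hab] at hw hw' hΦ hΦ'
  have hexp : ContinuousOn (fun x ↦ cexp (I * Φ x)) (uIcc a b) := fun x hx ↦
    ((hΦ x hx).ofReal_comp.const_mul I).cexp.continuousAt.continuousWithinAt
  have hderiv : ContinuousOn (fun x ↦ cexp (I * Φ x) * (I * Φ' x)) (uIcc a b) := by fun_prop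
  have parts := intervalIntegral.integral_mul_deriv_eq_deriv_mul
    (fun x hx ↦ (hw x hx).ofReal_comp) (fun x hx ↦ ((hΦ x hx).ofReal_comp.const_mul I).cexp)
    (continuous_ofReal.comp_continuousOn hw').intervalIntegrable hderiv.intervalIntegrable
  have hrem : ‖∫ x in a..b, (w' x : ℂ) * cexp (I * Φ x)‖ ≤ ∫ x in a..b, |w' x| := by
    refine intervalIntegral.norm_integral_le_of_norm_le hab (.of_forall fun _ _ ↦ ?_)
      hw'.abs.intervalIntegrable
    simp [norm_exp_I_mul_ofReal]
  calc ‖∫ x in a..b, ((w x * Φ' x : ℝ) : ℂ) * cexp (I * Φ x)‖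
      = ‖I * ∫ x in a..b, ((w x * Φ' x : ℝ) : ℂ) * cexp (I * Φ x)‖ := by simp
    _ = ‖∫ x in a..b, (w x : ℂ) * (cexp (I * Φ x) * (I * Φ' x))‖ := by
        rw [← intervalIntegral.integral_const_mul]
        congr! 3
        push_cast
        ring
    _ ≤ ‖(w b : ℂ) * cexp (I * Φ b)‖ + ‖(w a : ℂ) * cexp (I * Φ a)‖ + ∫ x in a..b, |w' x| := by
        rw [parts]
        exact (norm_sub_le _ _).trans (add_le_add (norm_sub_le _ _) hrem)
    _ = |w a| + |w b| + ∫ x in a..b, |w' x| := by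
        simp only [norm_mul, norm_real, Real.norm_eq_abs, norm_exp_I_mul_ofReal, mul_one]
        ring

-- For a monotone amplitude the total variation telescopes to the boundary values.
theorem norm_integral_mul_deriv_cexp_le_of_nonneg {a b : ℝ} (hab : a ≤ b) {w w' Φ Φ' : ℝ → ℝ}
    (hw : ∀ x ∈ Icc a b, HasDerivAt w (w' x) x) (hw' : ContinuousOn w' (Icc a b))
    (hw'_nonneg : ∀ x ∈ Icc a b, 0 ≤ w' x)
    (hΦ : ∀ x ∈ Icc a b, HasDerivAt Φ (Φ' x) x) (hΦ' : ContinuousOn Φ' (Icc a b)) :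
    ‖∫ x in a..b, ((w x * Φ' x : ℝ) : ℂ) * cexp (I * Φ x)‖ ≤ |w a| + |w b| + (w b - w a) := by
  have hvar : ∫ x in a..b, |w' x| = w b - w a := by
    rw [← uIcc_of_le hab] at hw hw' hw'_nonneg
    rw [intervalIntegral.integral_congr fun x hx ↦ abs_of_nonneg (hw'_nonneg x hx),
      intervalIntegral.integral_eq_sub_of_hasDerivAt hw hw'.intervalIntegrable]
  rw [← hvar]
  exact norm_integral_mul_deriv_cexp_le hab hw hw' hΦ hΦ'

theorem abs_quotient_deriv_le {x lam K M g g' p p' : ℝ} (hx : 0 < x) (hlam : 0 < lam)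
    (hg : |g| ≤ M * x) (hg' : |g'| ≤ M) (hp : lam ≤ p) (hp' : |x * p'| ≤ K * p) :
    |(g' * p - g * p') / p ^ 2| ≤ (1 + K) * M / lam := by
  have hp0 : 0 < p := hlam.trans_le hp
  have hM : 0 ≤ M := (abs_nonneg _).trans hg'
  have hK : 0 ≤ K := nonneg_of_mul_nonneg_left ((abs_nonneg _).trans hp') hp0
  rw [abs_div, abs_of_pos (pow_pos hp0 2), div_le_div_iff₀ (pow_pos hp0 2) hlam]
  calc |g' * p - g * p'| * lam ≤ (|g'| * p + |g| * |p'|) * lam := by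
        gcongr
        simpa only [abs_mul, abs_of_pos hp0] using abs_sub (g' * p) (g * p')
    _ ≤ (M * p + M * x * |p'|) * lam := by gcongr
    _ = (M * p + M * |x * p'|) * lam := by rw [abs_mul, abs_of_pos hx, mul_assoc M]
    _ ≤ (M * p + M * (K * p)) * p := by gcongr
    _ = (1 + K) * M * p ^ 2 := by ring

theorem norm_integral_mul_cexp_le_of_le_deriv {a b lam K M : ℝ} (ha : 0 < a) (hab : a ≤ b)
    (hlam : 0 < lam) {g Φ : ℝ → ℝ} (hg : ContDiff ℝ 1 g) (hΦ : ContDiff ℝ 2 Φ)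
    (hga : g a = 0) (hgb : g b = 0) (hgM : ∀ x ∈ Icc a b, |g x| ≤ M * x)
    (hg'M : ∀ x ∈ Icc a b, |deriv g x| ≤ M) (hΦlam : ∀ x ∈ Icc a b, lam ≤ deriv Φ x)
    (hΦK : ∀ x ∈ Icc a b, |x * deriv (deriv Φ) x| ≤ K * deriv Φ x) :
    ‖∫ x in a..b, (g x : ℂ) * cexp (I * Φ x)‖ ≤ (b - a) * ((1 + K) * M / lam) := by
  have hΦ' : ContDiff ℝ 1 (deriv Φ) := hΦ.deriv'
  have hne : ∀ x ∈ Icc a b, deriv Φ x ≠ 0 := fun x hx ↦ (hlam.trans_le (hΦlam x hx)).ne'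
  let w' x := (deriv g x * deriv Φ x - g x * deriv (deriv Φ) x) / deriv Φ x ^ 2
  have hw : ∀ x ∈ Icc a b, HasDerivAt (fun x ↦ g x / deriv Φ x) (w' x) x := fun x hx ↦
    (hg.differentiable one_ne_zero x).hasDerivAt.fun_div
      (hΦ'.differentiable one_ne_zero x).hasDerivAt (hne x hx)
  have hw' : ContinuousOn w' (Icc a b) := by
    have := hg.continuous
    have := hg.continuous_deriv le_rfl
    have := hΦ'.continuous
    have := hΦ'.continuous_deriv le_rfl
    exact ContinuousOn.div (by fun_prop) (by fun_prop) fun x hx ↦ pow_ne_zero 2 (hne x hx)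
  calc ‖∫ x in a..b, (g x : ℂ) * cexp (I * Φ x)‖
      = ‖∫ x in a..b, ((g x / deriv Φ x * deriv Φ x : ℝ) : ℂ) * cexp (I * Φ x)‖ := by
        congr 1
        refine intervalIntegral.integral_congr fun x hx ↦ ?_
        simp only [div_mul_cancel₀ _ (hne x (uIcc_of_le hab ▸ hx))]
    _ ≤ ∫ x in a..b, |w' x| := by
        simpa [hga, hgb] using norm_integral_mul_deriv_cexp_le hab hw hw'
          (fun x _ ↦ (hΦ.differentiable two_ne_zero x).hasDerivAt) hΦ'.continuous.continuousOn
    _ ≤ ∫ _ in a..b, (1 + K) * M / lam :=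
        intervalIntegral.integral_mono_on hab
          (uIcc_of_le hab ▸ hw'.abs).intervalIntegrable intervalIntegrable_const fun x hx ↦
            abs_quotient_deriv_le (ha.trans_le hx.1) hlam (hgM x hx) (hg'M x hx) (hΦlam x hx)
              (hΦK x hx)
    _ = (b - a) * ((1 + K) * M / lam) := by
        rw [intervalIntegral.integral_const, smul_eq_mul]

theorem norm_integral_cexp_le {a b : ℝ} (hab : a ≤ b) (Φ : ℝ → ℝ) :
    ‖∫ x in a..b, cexp (I * Φ x)‖ ≤ b - a := by
  simpa [abs_of_nonneg (sub_nonneg.2 hab)] using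
    intervalIntegral.norm_integral_le_of_norm_le_const (a := a) (b := b)
      fun x _ ↦ (norm_exp_I_mul_ofReal (Φ x)).le

theorem norm_integral_cexp_mul_cos_away_le {s δ : ℝ} (hs : 0 < s) (hδ : 0 < δ) (hδ' : δ ≤ π / 2) :
    ‖∫ θ in δ..π / 2, cexp (I * (s * Real.cos θ : ℝ))‖ ≤ π / (s * δ) := by
  have hsin : ∀ θ ∈ Icc δ (π / 2), 0 < s * Real.sin θ := fun θ hθ ↦
    mul_pos hs (Real.sin_pos_of_pos_of_lt_pi (hδ.trans_le hθ.1) (by linarith [hθ.2, Real.pi_pos]))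
  let w' θ := s * Real.cos θ / (s * Real.sin θ) ^ 2
  have hw : ∀ θ ∈ Icc δ (π / 2), HasDerivAt (fun θ ↦ -(s * Real.sin θ)⁻¹) (w' θ) θ :=
    fun θ hθ ↦ by
      simpa [w', neg_div] using
        (((Real.hasDerivAt_sin θ).const_mul s).fun_inv (hsin θ hθ).ne').fun_neg
  have hw' : ContinuousOn w' (Icc δ (π / 2)) :=
    ContinuousOn.div (by fun_prop) (by fun_prop) fun θ hθ ↦ pow_ne_zero 2 (hsin θ hθ).ne'
  have hw'_nonneg : ∀ θ ∈ Icc δ (π / 2), 0 ≤ w' θ := fun θ hθ ↦ by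
    have := Real.cos_nonneg_of_mem_Icc ⟨by linarith [hθ.1, Real.pi_pos], hθ.2⟩
    positivity
  have hsinδ : 0 < s * Real.sin δ := hsin δ ⟨le_rfl, hδ'⟩
  calc ‖∫ θ in δ..π / 2, cexp (I * (s * Real.cos θ : ℝ))‖
      = ‖∫ θ in δ..π / 2, ((-(s * Real.sin θ)⁻¹ * (s * -Real.sin θ) : ℝ) : ℂ) *
          cexp (I * (s * Real.cos θ : ℝ))‖ := by
        congr 1
        refine intervalIntegral.integral_congr fun θ hθ ↦ ?_
        have := (hsin θ (uIcc_of_le hδ' ▸ hθ)).ne'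
        simp only [mul_neg, neg_mul, neg_neg, inv_mul_cancel₀ this, ofReal_one, one_mul]
    _ ≤ |-(s * Real.sin δ)⁻¹| + |-(s * Real.sin (π / 2))⁻¹| +
          (-(s * Real.sin (π / 2))⁻¹ - -(s * Real.sin δ)⁻¹) :=
        norm_integral_mul_deriv_cexp_le_of_nonneg hδ' hw hw' hw'_nonneg
          (fun θ _ ↦ (Real.hasDerivAt_cos θ).const_mul s) (by fun_prop)
    _ = 2 * (s * Real.sin δ)⁻¹ := by
        rw [abs_neg, abs_neg, abs_of_pos (by positivity), Real.sin_pi_div_two, mul_one,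
          abs_of_pos (by positivity)]
        ring
    _ ≤ 2 * (s * (2 / π * δ))⁻¹ := by
        gcongr
        exact Real.mul_le_sin hδ.le hδ'
    _ = π / (s * δ) := by field_simp

theorem norm_integral_cexp_mul_cos_quarter_le {s : ℝ} (hs : 0 < s) :
    ‖∫ θ in (0 : ℝ)..π / 2, cexp (I * (s * Real.cos θ : ℝ))‖ ≤ (1 + π) / √s := by
  set δ := 1 / √s with hδ
  have hδ0 : 0 < δ := by positivity
  have hbound : (1 + π) / √s = δ + π / (s * δ) := by
    rw [hδ, mul_one_div, Real.div_sqrt, ← add_div]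
  have hpi : 0 < π / (s * δ) := by positivity
  rw [hbound]
  rcases le_total δ (π / 2) with hle | hge
  · have hint : ∀ a b : ℝ,
        IntervalIntegrable (fun θ ↦ cexp (I * (s * Real.cos θ : ℝ))) volume a b :=
      fun a b ↦ Continuous.intervalIntegrable (by fun_prop) a b
    rw [← intervalIntegral.integral_add_adjacent_intervals (hint 0 δ) (hint δ (π / 2))]
    refine (norm_add_le _ _).trans (add_le_add ?_ (norm_integral_cexp_mul_cos_away_le hs hδ0 hle))
    simpa using norm_integral_cexp_le hδ0.le (fun θ ↦ s * Real.cos θ)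
  · have := norm_integral_cexp_le (by positivity : (0 : ℝ) ≤ π / 2) (fun θ ↦ s * Real.cos θ)
    linarith

theorem norm_integral_cexp_mul_cos_le {s : ℝ} (hs : 0 < s) :
    ‖∫ θ in -π..π, cexp (I * (s * Real.cos θ : ℝ))‖ ≤ 4 * ((1 + π) / √s) := by
  set e : ℝ → ℂ := fun θ ↦ cexp (I * (s * Real.cos θ : ℝ)) with he
  have hint : ∀ a b : ℝ, IntervalIntegrable e volume a b :=
    fun a b ↦ Continuous.intervalIntegrable (by fun_prop) a b
  have heven : ∫ θ in -π..0, e θ = ∫ θ in (0 : ℝ)..π, e θ := by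
    simpa [he] using intervalIntegral.integral_comp_neg (a := -π) (b := 0) e
  have hconj : ∫ θ in π / 2..π, e θ = starRingEnd ℂ (∫ θ in (0 : ℝ)..π / 2, e θ) := by
    have := intervalIntegral.integral_comp_sub_left (a := 0) (b := π / 2) e π
    rw [sub_zero, sub_half] at this
    rw [← this, ← intervalIntegral.intervalIntegral_conj]
    simp only [he, ← exp_conj, map_mul, conj_I, conj_ofReal, Real.cos_pi_sub, mul_neg, ofReal_neg,
      neg_mul]
  rw [← intervalIntegral.integral_add_adjacent_intervals (hint (-π) 0) (hint 0 π), heven,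
    ← intervalIntegral.integral_add_adjacent_intervals (hint 0 (π / 2)) (hint (π / 2) π), hconj,
    ← two_mul, norm_mul, RCLike.norm_ofNat]
  have hquarter := norm_integral_cexp_mul_cos_quarter_le hs
  have htriangle := norm_add_le (∫ θ in (0 : ℝ)..π / 2, e θ)
    (starRingEnd ℂ (∫ θ in (0 : ℝ)..π / 2, e θ))
  rw [RCLike.norm_conj] at htriangle
  linarith

end OscillatoryIntegrals

section WavelikePhases

/-- Radial phases behaving like that of the wave equation: the group velocity `φ'` is bounded below
by `1` and its logarithmic derivative `r φ''(r) / φ'(r)` is bounded by `K`. All dispersive estimates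
for such a phase depend on it through `K` alone. -/
structure IsWavelikePhase (K : ℝ) (φ : ℝ → ℝ) : Prop where
  contDiff : ContDiff ℝ 2 φ
  one_le_deriv : ∀ r, 0 < r → 1 ≤ deriv φ r
  abs_mul_deriv_deriv_le : ∀ r, 0 < r → |r * deriv (deriv φ) r| ≤ K * deriv φ r

/-- The radial phase `r √(1 + ε² r²)`, i.e. `ε φ_ε(r)` in terms of the symbol `φ_ε` of `H_ε`. -/
def bogoliubovPhase (ε r : ℝ) : ℝ :=
  r * √(1 + ε ^ 2 * r ^ 2)

theorem bogoliubovPhase_mul (ε N r : ℝ) :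
    bogoliubovPhase ε (N * r) = N * bogoliubovPhase (ε * N) r := by
  simp only [bogoliubovPhase]
  ring_nf

theorem contDiff_bogoliubovPhase (ε : ℝ) {n : WithTop ℕ∞} : ContDiff ℝ n (bogoliubovPhase ε) :=
  contDiff_id.mul (ContDiff.sqrt (by fun_prop) fun r ↦ by positivity)

theorem hasDerivAt_sqrt_one_add_sq (ε r : ℝ) :
    HasDerivAt (fun r ↦ √(1 + ε ^ 2 * r ^ 2)) (ε ^ 2 * r / √(1 + ε ^ 2 * r ^ 2)) r := by
  have hsq : HasDerivAt (fun r ↦ 1 + ε ^ 2 * r ^ 2) (ε ^ 2 * (2 * r)) r := by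
    simpa using ((hasDerivAt_pow 2 r).const_mul (ε ^ 2)).const_add 1
  convert hsq.sqrt (by positivity) using 1
  field_simp

theorem deriv_bogoliubovPhase (ε r : ℝ) :
    deriv (bogoliubovPhase ε) r = 2 * √(1 + ε ^ 2 * r ^ 2) - (√(1 + ε ^ 2 * r ^ 2))⁻¹ := by
  have hu : √(1 + ε ^ 2 * r ^ 2) ^ 2 = 1 + ε ^ 2 * r ^ 2 := Real.sq_sqrt (by positivity)
  have h : HasDerivAt (bogoliubovPhase ε) _ r :=
    (hasDerivAt_id r).fun_mul (hasDerivAt_sqrt_one_add_sq ε r)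
  rw [h.deriv]
  field_simp
  simp only [id]
  linear_combination -hu

theorem mul_deriv_deriv_bogoliubovPhase (ε r : ℝ) :
    r * deriv (deriv (bogoliubovPhase ε)) r =
      deriv (bogoliubovPhase ε) r - (√(1 + ε ^ 2 * r ^ 2))⁻¹ ^ 3 := by
  have husq : √(1 + ε ^ 2 * r ^ 2) ^ 2 = 1 + ε ^ 2 * r ^ 2 := Real.sq_sqrt (by positivity)
  have hupos : 0 < √(1 + ε ^ 2 * r ^ 2) := by positivity
  have hu := hasDerivAt_sqrt_one_add_sq ε r
  rw [deriv_bogoliubovPhase, funext (deriv_bogoliubovPhase ε),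
    ((hu.const_mul 2).fun_sub (hu.fun_inv hupos.ne')).deriv]
  generalize √(1 + ε ^ 2 * r ^ 2) = u at husq hupos
  field_simp
  linear_combination (-2 * u ^ 2 - 1) * husq

theorem isWavelikePhase_bogoliubovPhase (ε : ℝ) : IsWavelikePhase 1 (bogoliubovPhase ε) := by
  have hu : ∀ r, 1 ≤ √(1 + ε ^ 2 * r ^ 2) := fun r ↦
    Real.one_le_sqrt.2 (le_add_of_nonneg_right (by positivity))
  have hone : ∀ r, 1 ≤ deriv (bogoliubovPhase ε) r := fun r ↦ by
    rw [deriv_bogoliubovPhase]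
    linarith [hu r, inv_le_one_of_one_le₀ (hu r)]
  refine ⟨contDiff_bogoliubovPhase ε, fun r _ ↦ hone r, fun r _ ↦ ?_⟩
  have hcube : (√(1 + ε ^ 2 * r ^ 2))⁻¹ ^ 3 ≤ 1 :=
    pow_le_one₀ (by positivity) (inv_le_one_of_one_le₀ (hu r))
  have hcube_nonneg : 0 ≤ (√(1 + ε ^ 2 * r ^ 2))⁻¹ ^ 3 := by positivity
  rw [mul_deriv_deriv_bogoliubovPhase, abs_of_nonneg] <;> linarith [hone r]

end WavelikePhases

section RadialFourier

open Set
open scoped Real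

theorem fourierInv_comp_norm_eq_of_norm_eq {V W E : Type*}
    [NormedAddCommGroup V] [InnerProductSpace ℝ V] [MeasurableSpace V] [BorelSpace V]
    [FiniteDimensional ℝ V] [NormedAddCommGroup W] [InnerProductSpace ℝ W] [MeasurableSpace W]
    [BorelSpace W] [FiniteDimensional ℝ W] [NormedAddCommGroup E] [NormedSpace ℂ E]
    (A : V ≃ₗᵢ[ℝ] W) (F : ℝ → E) {x : V} {y : W} (hxy : ‖x‖ = ‖y‖) :
    𝓕⁻ (fun v : V ↦ F ‖v‖) x = 𝓕⁻ (fun w : W ↦ F ‖w‖) y := by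
  let R := (ℝ ∙ (A x - y))ᗮ.reflection
  have hR : R (A x) = y := Submodule.reflection_sub ((A.norm_map x).trans hxy)
  have := Real.fourierInv_comp_linearIsometry (A.trans R) (fun w : W ↦ F ‖w‖) x
  simpa [Function.comp_def, hR] using this

theorem fourierInv_comp_norm_eq_polar {a b : ℝ} (ha : 0 ≤ a) (hab : a ≤ b) {F : ℝ → ℂ}
    (hF : Continuous F) (hsupp : Function.support F ⊆ Ioc a b) (x : E2) :
    𝓕⁻ (fun η : E2 ↦ F ‖η‖) x =
      ∫ r in a..b, ∫ θ in -π..π, r * F r * cexp (I * (2 * π * ‖x‖ * r * Real.cos θ : ℝ)) := by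
  let G : ℝ × ℝ → ℂ := fun p ↦ p.1 * F p.1 * cexp (I * (2 * π * ‖x‖ * p.1 * Real.cos p.2 : ℝ))
  have hG : Continuous G := by fun_prop
  have hG0 : ∀ p ∈ polarCoord.target \ Ioc a b ×ˢ Ioo (-π) π, G p = 0 := by
    rintro p ⟨hp, hp'⟩
    have : F p.1 = 0 := by_contra fun h ↦ hp' ⟨hsupp h, hp.2⟩
    simp [G, this]
  have hGint : IntegrableOn G (Ioc a b ×ˢ Ioo (-π) π) :=
    (hG.continuousOn.integrableOn_compact (isCompact_Icc.prod isCompact_Icc)).mono_set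
      (prod_mono Ioc_subset_Icc_self Ioo_subset_Icc_self)
  calc 𝓕⁻ (fun η : E2 ↦ F ‖η‖) x = 𝓕⁻ (fun z : ℂ ↦ F ‖z‖) (‖x‖ : ℂ) :=
        fourierInv_comp_norm_eq_of_norm_eq orthonormalBasisOneI.repr.symm F (by simp)
    _ = ∫ p in polarCoord.target, G p := by
        rw [Real.fourierInv_eq', ← Complex.integral_comp_polarCoord_symm]
        refine setIntegral_congr_fun polarCoord.open_target.measurableSet fun p hp ↦ ?_
        have hnorm : ‖Complex.polarCoord.symm p‖ = p.1 := by
          rw [norm_polarCoord_symm, abs_of_pos hp.1]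
        have hinner : inner ℝ (Complex.polarCoord.symm p) (‖x‖ : ℂ) =
            ‖x‖ * (p.1 * Real.cos p.2) := by
          simp [Complex.inner, Complex.polarCoord_symm_apply, cos_ofReal_re, sin_ofReal_im]
        simp only [G, hnorm, hinner, real_smul, smul_eq_mul]
        ring_nf
    _ = ∫ p in Ioc a b ×ˢ Ioo (-π) π, G p :=
        setIntegral_eq_of_subset_of_forall_sdiff_eq_zero polarCoord.open_target.measurableSet
          (prod_mono (fun r hr ↦ ha.trans_lt hr.1) subset_rfl) hG0
    _ = ∫ r in a..b, ∫ θ in -π..π, G (r, θ) := by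
        rw [Measure.volume_eq_prod, setIntegral_prod _ hGint, intervalIntegral.integral_of_le hab]
        simp_rw [intervalIntegral.integral_of_le (neg_le_self Real.pi_nonneg),
          integral_Ioc_eq_integral_Ioo]

theorem IsWavelikePhase.norm_integral_tilted_le {a b l c K M : ℝ} (ha : 0 < a) (hab : a ≤ b)
    (hl : 0 < l) (hc : |c| ≤ l / 2) {g φ : ℝ → ℝ} (hφ : IsWavelikePhase K φ)
    (hg : ContDiff ℝ 1 g) (hga : g a = 0) (hgb : g b = 0)
    (hgM : ∀ r ∈ Icc a b, |g r| ≤ M * r) (hg'M : ∀ r ∈ Icc a b, |deriv g r| ≤ M) :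
    ‖∫ r in a..b, (g r : ℂ) * cexp (I * (l * φ r + c * r : ℝ))‖ ≤
      (b - a) * ((1 + 2 * K) * M / (l / 2)) := by
  have hφ' : ContDiff ℝ 1 (deriv φ) := hφ.contDiff.deriv'
  have hderiv : deriv (fun r ↦ l * φ r + c * r) = fun r ↦ l * deriv φ r + c := funext fun r ↦ by
    simpa using (((hφ.contDiff.differentiable two_ne_zero r).hasDerivAt.const_mul l).fun_add
      ((hasDerivAt_id r).const_mul c)).deriv
  have hderiv2 : deriv (fun r ↦ l * deriv φ r + c) = fun r ↦ l * deriv (deriv φ) r :=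
    funext fun r ↦
      (((hφ'.differentiable one_ne_zero r).hasDerivAt.const_mul l).add_const c).deriv
  have hlow : ∀ r, 0 < r → l * deriv φ r / 2 ≤ l * deriv φ r + c := fun r hr ↦ by
    have := le_mul_of_one_le_right hl.le (hφ.one_le_deriv r hr)
    linarith [(abs_le.1 hc).1]
  refine norm_integral_mul_cexp_le_of_le_deriv ha hab (half_pos hl) hg
    ((contDiff_const.mul hφ.contDiff).add (contDiff_const.mul contDiff_id)) hga hgb hgM hg'M ?_ ?_
  · intro r hr
    have hr0 := ha.trans_le hr.1
    rw [hderiv]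
    linarith [hlow r hr0, le_mul_of_one_le_right hl.le (hφ.one_le_deriv r hr0)]
  · intro r hr
    have hr0 := ha.trans_le hr.1
    have hφr := hφ.abs_mul_deriv_deriv_le r hr0
    have hK : 0 ≤ K := nonneg_of_mul_nonneg_left ((abs_nonneg _).trans hφr)
      (zero_lt_one.trans_le (hφ.one_le_deriv r hr0))
    rw [hderiv, hderiv2]
    calc |r * (l * deriv (deriv φ) r)| = l * |r * deriv (deriv φ) r| := by
          rw [mul_left_comm, abs_mul, abs_of_pos hl]
      _ ≤ l * (K * deriv φ r) := by gcongr
      _ = 2 * K * (l * deriv φ r / 2) := by ring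
      _ ≤ 2 * K * (l * deriv φ r + c) := by gcongr; exact hlow r hr0

theorem norm_intervalIntegral_intervalIntegral_le {E : Type*} [NormedAddCommGroup E]
    [NormedSpace ℝ E] {a b c d D : ℝ} {G : ℝ → ℝ → E}
    (hG : ∀ x ∈ uIoc a b, ∀ y ∈ uIoc c d, ‖G x y‖ ≤ D) :
    ‖∫ x in a..b, ∫ y in c..d, G x y‖ ≤ D * |d - c| * |b - a| :=
  intervalIntegral.norm_integral_le_of_norm_le_const fun x hx ↦
    intervalIntegral.norm_integral_le_of_norm_le_const (hG x hx)

/-- The integral of `g(r) e^{i(l φ(r) + s r cos θ)}` over an annulus in polar coordinates, to which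
the inverse Fourier transform of a radial function on the plane reduces; `g` includes the Jacobian
factor `r`. -/
def polarIntegral (a b : ℝ) (g φ : ℝ → ℝ) (l s : ℝ) : ℂ :=
  ∫ r in a..b, ∫ θ in -π..π, g r * cexp (I * (l * φ r + s * r * Real.cos θ : ℝ))

-- Inside the light cone (`|s| ≤ l / 2`) the radial phase has no stationary point for any `θ`.
theorem IsWavelikePhase.norm_polarIntegral_le_of_abs_le {a b l s K M : ℝ} (ha : 0 < a)
    (hab : a ≤ b) (hl : 0 < l) (hs : |s| ≤ l / 2) {g φ : ℝ → ℝ} (hφ : IsWavelikePhase K φ)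
    (hg : ContDiff ℝ 1 g) (hga : g a = 0) (hgb : g b = 0)
    (hgM : ∀ r ∈ Icc a b, |g r| ≤ M * r) (hg'M : ∀ r ∈ Icc a b, |deriv g r| ≤ M) :
    ‖polarIntegral a b g φ l s‖ ≤ (b - a) * ((1 + 2 * K) * M / (l / 2)) * |π - -π| := by
  let G : ℝ × ℝ → ℂ := fun p ↦ g p.1 * cexp (I * (l * φ p.1 + s * p.1 * Real.cos p.2 : ℝ))
  have hG : Continuous G := by
    have := hg.continuous
    have := hφ.contDiff.continuous
    fun_prop
  have hGint : IntegrableOn G (uIoc a b ×ˢ uIoc (-π) π) :=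
    (hG.continuousOn.integrableOn_compact (isCompact_uIcc.prod isCompact_uIcc)).mono_set
      (prod_mono uIoc_subset_uIcc uIoc_subset_uIcc)
  rw [polarIntegral, intervalIntegral_intervalIntegral_swap (F := fun r θ ↦ G (r, θ)) hGint]
  refine intervalIntegral.norm_integral_le_of_norm_le_const fun θ _ ↦ ?_
  have hc : |s * Real.cos θ| ≤ l / 2 := by
    rw [abs_mul]
    exact (mul_le_of_le_one_right (abs_nonneg s) (Real.abs_cos_le_one θ)).trans hs
  simpa only [G, mul_right_comm s] using
    hφ.norm_integral_tilted_le ha hab hl hc hg hga hgb hgM hg'M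

-- Outside the light cone the angular integral alone decays like `(s r)^(-1/2)`.
theorem norm_polarIntegral_le_of_le {a b l s D : ℝ} (ha : 0 < a) (hab : a ≤ b)
    (hl : 0 < l) (hs : l / 2 ≤ s) {g φ : ℝ → ℝ} (hgD : ∀ r ∈ Icc a b, |g r| ≤ D) :
    ‖polarIntegral a b g φ l s‖ ≤ D * (4 * ((1 + π) / √(l / 2 * a))) * |b - a| := by
  refine intervalIntegral.norm_integral_le_of_norm_le_const fun r hr ↦ ?_
  have hr' : r ∈ Icc a b := Ioc_subset_Icc_self (uIoc_of_le hab ▸ hr)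
  have hs0 : 0 < s := (half_pos hl).trans_le hs
  have hfactor : ∀ θ : ℝ, (g r : ℂ) * cexp (I * (l * φ r + s * r * Real.cos θ : ℝ)) =
      (g r * cexp (I * (l * φ r : ℝ))) * cexp (I * (s * r * Real.cos θ : ℝ)) := fun θ ↦ by
    rw [ofReal_add, mul_add, Complex.exp_add, ← mul_assoc]
  simp_rw [hfactor]
  rw [intervalIntegral.integral_const_mul, norm_mul, norm_mul, norm_exp_I_mul_ofReal, mul_one,
    norm_real]
  have hD := hgD r hr'
  calc ‖g r‖ * ‖∫ θ in -π..π, cexp (I * (s * r * Real.cos θ : ℝ))‖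
      ≤ D * (4 * ((1 + π) / √(s * r))) :=
        mul_le_mul hD (norm_integral_cexp_mul_cos_le (mul_pos hs0 (ha.trans_le hr'.1)))
          (norm_nonneg _) ((abs_nonneg _).trans hD)
    _ ≤ D * (4 * ((1 + π) / √(l / 2 * a))) := by
        have := (abs_nonneg _).trans hD
        gcongr
        exact hr'.1

theorem le_add_div_sqrt {A B X l : ℝ} (hl : 0 < l) (hX : 0 ≤ X) (hA : X ≤ A) (hB : X ≤ B / l) :
    X ≤ (A + B) / √l := by
  rw [le_div_iff₀ hl] at hB
  rw [le_div_iff₀ (by positivity)]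
  have : √l ≤ 1 + l := Real.sqrt_le_iff.2 ⟨by positivity, by nlinarith⟩
  nlinarith

theorem exists_abs_le_mul_and_abs_deriv_le {a : ℝ} (ha : 0 < a) (b : ℝ) {g : ℝ → ℝ}
    (hg : ContDiff ℝ 1 g) :
    ∃ M ≥ 0, ∀ r ∈ Icc a b, |g r| ≤ M * r ∧ |deriv g r| ≤ M := by
  have hpair : Continuous fun r ↦ (g r / a, deriv g r) :=
    (hg.continuous.div_const a).prodMk (hg.continuous_deriv le_rfl)
  obtain ⟨M, hM⟩ := isCompact_Icc.exists_bound_of_continuousOn (s := Icc a b) hpair.continuousOn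
  refine ⟨max M 0, le_max_right _ _, fun r hr ↦ ?_⟩
  obtain ⟨hg, hg'⟩ := norm_prod_le_iff.1 ((hM r hr).trans (le_max_left M 0))
  rw [Real.norm_eq_abs, abs_div, abs_of_pos ha, div_le_iff₀ ha] at hg
  exact ⟨hg.trans (by gcongr; exact hr.1), hg'⟩

theorem exists_norm_polarIntegral_le {a b : ℝ} (ha : 0 < a) (hab : a ≤ b) {g : ℝ → ℝ}
    (hg : ContDiff ℝ 1 g) (hga : g a = 0) (hgb : g b = 0) (K : ℝ) :
    ∃ C > 0, ∀ φ, IsWavelikePhase K φ → ∀ l > 0, ∀ s ≥ 0,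
      ‖polarIntegral a b g φ l s‖ ≤ C / √l := by
  obtain ⟨M, hM, hbound⟩ := exists_abs_le_mul_and_abs_deriv_le ha b hg
  have hgD : ∀ r ∈ Icc a b, |g r| ≤ M * b := fun r hr ↦
    (hbound r hr).1.trans (mul_le_mul_of_nonneg_left hr.2 hM)
  let A := M * b * |π - -π| * |b - a|
  let B := (b - a) * ((1 + 2 * K) * M * 2) * |π - -π|
  let E := M * b * (4 * ((1 + π) / √(a / 2))) * |b - a|
  refine ⟨max 1 (max (A + B) E), by positivity, fun φ hφ l hl s hs ↦ ?_⟩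
  rcases le_total s (l / 2) with hin | hout
  · have htrivial : ‖polarIntegral a b g φ l s‖ ≤ A :=
      norm_intervalIntegral_intervalIntegral_le fun r hr θ _ ↦ by
        rw [norm_mul, norm_exp_I_mul_ofReal, mul_one, norm_real]
        exact hgD r (Ioc_subset_Icc_self (uIoc_of_le hab ▸ hr))
    have htilted : ‖polarIntegral a b g φ l s‖ ≤ B / l :=
      (hφ.norm_polarIntegral_le_of_abs_le ha hab hl ((abs_of_nonneg hs).trans_le hin) hg hga hgb
        (fun r hr ↦ (hbound r hr).1) fun r hr ↦ (hbound r hr).2).trans_eq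
          (by simp only [B]; field_simp)
    refine (le_add_div_sqrt hl (norm_nonneg _) htrivial htilted).trans ?_
    gcongr
    exact (le_max_left _ _).trans (le_max_right _ _)
  · calc _ ≤ M * b * (4 * ((1 + π) / √(l / 2 * a))) * |b - a| :=
          norm_polarIntegral_le_of_le ha hab hl hout hgD
      _ = E / √l := by
          rw [show l / 2 * a = l * (a / 2) by ring, Real.sqrt_mul hl.le]
          simp only [E]
          field_simp
      _ ≤ max 1 (max (A + B) E) / √l := by
          gcongr
          exact (le_max_right _ _).trans (le_max_right _ _)

theorem exists_norm_fourierInv_wavelike_le {a b : ℝ} (ha : 0 < a) (hab : a ≤ b) {χ : ℝ → ℝ}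
    (hχ : ContDiff ℝ 1 χ) (hsupp : Function.support χ ⊆ Ioo a b) (K : ℝ) :
    ∃ C > 0, ∀ φ, IsWavelikePhase K φ → ∀ l > 0, ∀ x : E2,
      ‖𝓕⁻ (fun η : E2 ↦ (χ ‖η‖ : ℂ) * cexp (I * (l * φ ‖η‖ : ℝ))) x‖ ≤ C / √l := by
  have hzero : ∀ r ∉ Ioo a b, χ r = 0 := fun r hr ↦ by_contra fun h ↦ hr (hsupp h)
  obtain ⟨C, hC, hbound⟩ := exists_norm_polarIntegral_le ha hab (g := fun r ↦ r * χ r)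
    (contDiff_id.mul hχ) (by simp [hzero a]) (by simp [hzero b]) K
  refine ⟨C, hC, fun φ hφ l hl x ↦ ?_⟩
  have hcont : Continuous fun r ↦ (χ r : ℂ) * cexp (I * (l * φ r : ℝ)) := by
    have := hχ.continuous
    have := hφ.contDiff.continuous
    fun_prop
  rw [fourierInv_comp_norm_eq_polar ha.le hab (F := fun r ↦ (χ r : ℂ) * cexp (I * (l * φ r : ℝ)))
    hcont fun r hr ↦ Ioo_subset_Ioc_self (hsupp (by simpa using left_ne_zero_of_mul hr))]
  refine (congrArg norm ?_).trans_le (hbound φ hφ l hl (2 * π * ‖x‖) (by positivity))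
  rw [polarIntegral]
  congr! 4 with r θ
  rw [ofReal_add, mul_add, Complex.exp_add]
  push_cast
  ring

end RadialFourier

section FourierMultipliers

variable {V : Type*} [NormedAddCommGroup V] [InnerProductSpace ℝ V] [MeasurableSpace V]
  [BorelSpace V] [FiniteDimensional ℝ V]

theorem fourier_eq_zero_of_not_integrable {f : V → ℂ} (hf : ¬Integrable f) : 𝓕 f = 0 := by
  ext w
  rw [Real.fourier_eq]
  exact integral_undef (mt (Real.fourierIntegral_convergent_iff w).1 hf)

theorem fourierInv_zero : 𝓕⁻ (0 : V → ℂ) = 0 := by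
  ext x
  simp [Real.fourierInv_eq']

-- The integral of a non-integrable function is `0` by convention.
theorem continuous_fourier (f : V → ℂ) : Continuous (𝓕 f) := by
  by_cases hf : Integrable f
  · exact VectorFourier.fourierIntegral_continuous Real.continuous_fourierChar
      (innerSL ℝ).continuous₂ hf
  · simpa only [fourier_eq_zero_of_not_integrable hf] using continuous_zero

theorem fourierInv_eq_fourier_comp_neg (f : V → ℂ) : 𝓕⁻ f = fun x ↦ 𝓕 f (-x) :=
  funext (Real.fourierInv_eq_fourier_neg f)

theorem continuous_fourierInv (f : V → ℂ) : Continuous (𝓕⁻ f) := by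
  rw [fourierInv_eq_fourier_comp_neg]
  exact (continuous_fourier f).comp continuous_neg

theorem fourier_fourierInv_eq_of_integrable {F : V → ℂ} (hF : Continuous F) (hint : Integrable F)
    (hinv : Integrable (𝓕⁻ F)) : 𝓕 (𝓕⁻ F) = F :=
  hF.fourier_fourierInv_eq hint <| by
    simpa [fourierInv_eq_fourier_comp_neg] using hinv.comp_neg

theorem fourier_fourierInv_eq_or_eq_zero {F : V → ℂ} (hF : Continuous F) :
    𝓕 (𝓕⁻ F) = F ∨ 𝓕 (𝓕⁻ F) = 0 := by
  by_cases hinv : Integrable (𝓕⁻ F)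
  · by_cases hint : Integrable F
    · exact .inl (fourier_fourierInv_eq_of_integrable hF hint hinv)
    · have hzero : 𝓕⁻ F = 0 := by
        simp only [fourierInv_eq_fourier_comp_neg, fourier_eq_zero_of_not_integrable hint]
        rfl
      right
      ext x
      simp [hzero, Real.fourier_eq']
  · exact .inr (fourier_eq_zero_of_not_integrable hinv)

theorem fourierInv_mul_fourier {m h : V → ℂ} (hm : Integrable m) (hh : Integrable h) (x : V) :
    𝓕⁻ (fun ξ ↦ m ξ * 𝓕 h ξ) x = ∫ y, h y * 𝓕⁻ m (x - y) := by
  let G : V → ℂ := fun ξ ↦ cexp ((2 * Real.pi * inner ℝ ξ x : ℝ) * I) * m ξ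
  have hG : Integrable G := hm.bdd_mul (c := 1) (Continuous.aestronglyMeasurable (by fun_prop))
    (.of_forall fun ξ ↦ (Complex.norm_exp_ofReal_mul_I _).le)
  have hGfourier : ∀ y, 𝓕 G y = 𝓕⁻ m (x - y) := fun y ↦ by
    rw [Real.fourier_eq', Real.fourierInv_eq']
    congr! 2 with ξ
    simp only [G, smul_eq_mul]
    rw [← mul_assoc, ← Complex.exp_add, inner_sub_right]
    congr 2
    push_cast
    ring
  calc 𝓕⁻ (fun ξ ↦ m ξ * 𝓕 h ξ) x = ∫ ξ, 𝓕 h ξ • G ξ := by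
        rw [Real.fourierInv_eq']
        congr! 2 with ξ
        simp only [G, smul_eq_mul]
        ring
    _ = ∫ y, h y • 𝓕 G y := by
        simpa using! VectorFourier.integral_fourierIntegral_smul_eq_flip (L := innerₗ V)
          Real.continuous_fourierChar continuous_inner hh hG
    _ = ∫ y, h y * 𝓕⁻ m (x - y) := by simp only [hGfourier, smul_eq_mul]

theorem eLpNorm_top_fourierInv_mul_fourier_le {m h : V → ℂ} (hm : Integrable m)
    (hh : Integrable h) {B : ℝ} (hB : ∀ x, ‖𝓕⁻ m x‖ ≤ B) :
    eLpNorm (𝓕⁻ fun ξ ↦ m ξ * 𝓕 h ξ) ⊤ volume ≤ ENNReal.ofReal B * eLpNorm h 1 volume := by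
  have hB0 : 0 ≤ B := (norm_nonneg _).trans (hB 0)
  have hsup : ∀ x, ‖𝓕⁻ (fun ξ ↦ m ξ * 𝓕 h ξ) x‖ ≤ B * ∫ y, ‖h y‖ := fun x ↦ by
    rw [fourierInv_mul_fourier hm hh, ← integral_const_mul]
    refine norm_integral_le_of_norm_le (hh.norm.const_mul B) (.of_forall fun y ↦ ?_)
    rw [norm_mul, mul_comm]
    gcongr
    exact hB _
  rw [eLpNorm_one_eq_lintegral_enorm, ← ofReal_integral_norm_eq_lintegral_enorm hh,
    ← ENNReal.ofReal_mul hB0, eLpNorm_exponent_top]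
  exact eLpNormEssSup_le_of_ae_bound (.of_forall hsup)

theorem eLpNorm_top_fourierInv_mul_le {m G : V → ℂ} (hm : Integrable m) {B : ℝ} (hB0 : 0 < B)
    (hB : ∀ x, ‖𝓕⁻ m x‖ ≤ B) (hG : Continuous G) (hGint : Integrable G) :
    eLpNorm (𝓕⁻ fun ξ ↦ m ξ * G ξ) ⊤ volume ≤ ENNReal.ofReal B * eLpNorm (𝓕⁻ G) 1 volume := by
  by_cases hinv : Integrable (𝓕⁻ G)
  · simpa only [fourier_fourierInv_eq_of_integrable hG hGint hinv] using
      eLpNorm_top_fourierInv_mul_fourier_le hm hinv hB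
  · have htop : eLpNorm (𝓕⁻ G) 1 volume = ⊤ := by
      by_contra h
      exact hinv (memLp_one_iff_integrable.1
        ⟨(continuous_fourierInv G).aestronglyMeasurable, lt_top_iff_ne_top.2 h⟩)
    rw [htop, ENNReal.mul_top (by simpa using hB0)]
    exact le_top

theorem fourierInv_comp_inv_smul {N : ℝ} (hN : 0 < N) (F : V → ℂ) (x : V) :
    𝓕⁻ (fun ξ ↦ F (N⁻¹ • ξ)) x = N ^ Module.finrank ℝ V • 𝓕⁻ F (N • x) := by
  let G : V → ℂ := fun ξ ↦ cexp ((2 * Real.pi * inner ℝ ξ (N • x) : ℝ) * I) • F ξ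
  have := Measure.integral_comp_inv_smul_of_nonneg (volume : Measure V) G hN.le
  rw [Real.fourierInv_eq', Real.fourierInv_eq', ← this]
  congr! 3 with ξ
  simp only [inner_smul_left, inner_smul_right, conj_trivial]
  field_simp

theorem integrable_comp_norm_mul {χ : ℝ → ℝ} {F : V → ℂ} {β c : ℝ} (hχ : Continuous χ)
    (hsupp : Function.support χ ⊆ Set.Iic β) (hc : 0 < c) (hF : Continuous F) :
    Integrable fun ξ : V ↦ (χ (c * ‖ξ‖) : ℂ) * F ξ := by
  refine Continuous.integrable_of_hasCompactSupport (by fun_prop)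
    (HasCompactSupport.intro (isCompact_closedBall 0 (β / c)) fun ξ hξ ↦ ?_)
  have : χ (c * ‖ξ‖) = 0 := by_contra fun h ↦ hξ <|
    mem_closedBall_zero_iff.2 ((le_div_iff₀' hc).2 (hsupp h))
  simp [this]

theorem eLpNorm_top_fourierInv_cutoff_mul_le {ψ χ : ℝ → ℝ} {e g : V → ℂ} {β B c : ℝ} (hc : 0 < c)
    (hψ : Continuous ψ) (hχ : Continuous χ) (hχsupp : Function.support χ ⊆ Set.Iic β)
    (hχψ : ∀ r, ψ r ≠ 0 → χ r = 1) (he : Continuous e) (hg : Continuous g) (hB0 : 0 < B)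
    (hB : ∀ x, ‖𝓕⁻ (fun ξ ↦ (χ (c * ‖ξ‖) : ℂ) * e ξ) x‖ ≤ B) :
    eLpNorm (𝓕⁻ fun ξ ↦ (ψ (c * ‖ξ‖) : ℂ) * (e ξ * g ξ)) ⊤ volume ≤
      ENNReal.ofReal B * eLpNorm (𝓕⁻ fun ξ ↦ (ψ (c * ‖ξ‖) : ℂ) * g ξ) 1 volume := by
  have hψsupp : Function.support ψ ⊆ Set.Iic β := fun r hr ↦
    hχsupp (by simp [hχψ r hr])
  have hfactor : ∀ ξ : V, (ψ (c * ‖ξ‖) : ℂ) * (e ξ * g ξ) =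
      (χ (c * ‖ξ‖) * e ξ) * (ψ (c * ‖ξ‖) * g ξ) := fun ξ ↦ by
    by_cases hξ : ψ (c * ‖ξ‖) = 0
    · simp [hξ]
    · rw [hχψ _ hξ, ofReal_one]
      ring
  simp only [hfactor]
  exact eLpNorm_top_fourierInv_mul_le (integrable_comp_norm_mul hχ hχsupp hc he) hB0 hB
    (by fun_prop) (integrable_comp_norm_mul hψ hψsupp hc hg)

end FourierMultipliers

section DispersiveEstimate

open Set

theorem exists_contDiff_support_subset_eq_one {α β δ : ℝ} (hαβ : α < β) (hδ : 0 < δ)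
    {n : ℕ∞} :
    ∃ χ : ℝ → ℝ, ContDiff ℝ n χ ∧ Function.support χ ⊆ Ioo (α - δ) (β + δ) ∧
      ∀ r ∈ Icc α β, χ r = 1 := by
  let χ : ContDiffBump ((α + β) / 2) :=
    ⟨(β - α) / 2, (β - α) / 2 + δ, by linarith, by linarith⟩
  refine ⟨χ, χ.contDiff, ?_, fun r hr ↦ χ.one_of_mem_closedBall ?_⟩
  · rw [χ.support_eq, Real.ball_eq_Ioo]
    exact Ioo_subset_Ioo (by simp only [χ]; linarith) (by simp only [χ]; linarith)
  · rw [Real.closedBall_eq_Icc]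
    exact Icc_subset_Icc (by simp only [χ]; linarith) (by simp only [χ]; linarith) hr

theorem sq_mul_div_sqrt_mul {τ N : ℝ} (hτ : 0 < τ) (hN : 0 < N) (C : ℝ) :
    N ^ 2 * (C / √(τ * N)) = C * τ ^ (-(1 : ℝ) / 2) * N ^ (3 / 2 : ℝ) := by
  rw [Real.sqrt_eq_rpow, Real.mul_rpow hτ.le hN.le, neg_div, Real.rpow_neg hτ.le,
    show (3 / 2 : ℝ) = (2 : ℕ) - 1 / 2 by norm_num, Real.rpow_sub hN, Real.rpow_natCast]
  field_simp

theorem exists_norm_fourierInv_bogoliubov_le {a b : ℝ} (ha : 0 < a) (hab : a ≤ b) {χ : ℝ → ℝ}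
    (hχ : ContDiff ℝ 1 χ) (hsupp : Function.support χ ⊆ Ioo a b) :
    ∃ C > 0, ∀ ε, ∀ τ > 0, ∀ N > 0, ∀ x : E2,
      ‖𝓕⁻ (fun ξ : E2 ↦ (χ (N⁻¹ * ‖ξ‖) : ℂ) * cexp (I * (τ * bogoliubovPhase ε ‖ξ‖ : ℝ))) x‖ ≤
        C * τ ^ (-(1 : ℝ) / 2) * N ^ (3 / 2 : ℝ) := by
  obtain ⟨C, hC, hunit⟩ := exists_norm_fourierInv_wavelike_le ha hab hχ hsupp 1
  refine ⟨C, hC, fun ε τ hτ N hN x ↦ ?_⟩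
  let F : E2 → ℂ := fun η ↦
    (χ ‖η‖ : ℂ) * cexp (I * (τ * N * bogoliubovPhase (ε * N) ‖η‖ : ℝ))
  have hscale : (fun ξ : E2 ↦ (χ (N⁻¹ * ‖ξ‖) : ℂ) * cexp (I * (τ * bogoliubovPhase ε ‖ξ‖ : ℝ))) =
      fun ξ ↦ F (N⁻¹ • ξ) := funext fun ξ ↦ by
    simp only [F, norm_smul, norm_inv, Real.norm_of_nonneg hN.le]
    rw [mul_assoc τ, ← bogoliubovPhase_mul, mul_inv_cancel_left₀ hN.ne']
  rw [hscale, fourierInv_comp_inv_smul hN, finrank_euclideanSpace_fin, norm_smul,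
    Real.norm_of_nonneg (by positivity), ← sq_mul_div_sqrt_mul hτ hN]
  gcongr
  exact hunit _ (isWavelikePhase_bogoliubovPhase (ε * N)) (τ * N) (mul_pos hτ hN) _

theorem Heps_eq (ε t : ℝ) (f : E2 → ℂ) :
    Heps ε t f = 𝓕⁻ fun ξ ↦ cexp (I * (t / ε * bogoliubovPhase ε ‖ξ‖ : ℝ)) * 𝓕 f ξ := by
  simp only [Heps, bogoliubovPhase]
  congr! 6
  ring

theorem continuous_cexp_bogoliubovPhase (ε τ : ℝ) :
    Continuous fun ξ : E2 ↦ cexp (I * (τ * bogoliubovPhase ε ‖ξ‖ : ℝ)) := by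
  have := (contDiff_bogoliubovPhase ε (n := 0)).continuous
  fun_prop

-- The second alternative occurs when one of the integrals defining `Heps ε t f` or its Fourier
-- transform diverges, hence is `0` by convention.
theorem LP_Heps_eq_or_eq_zero (ψ : ℝ → ℝ) (k : ℤ) (ε t : ℝ) (f : E2 → ℂ) :
    LP ψ k (Heps ε t f) = (𝓕⁻ fun ξ ↦ (ψ ((2 : ℝ) ^ (-k) * ‖ξ‖) : ℂ) *
      (cexp (I * (t / ε * bogoliubovPhase ε ‖ξ‖ : ℝ)) * 𝓕 f ξ)) ∨ LP ψ k (Heps ε t f) = 0 := by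
  have hcont : Continuous fun ξ ↦ cexp (I * (t / ε * bogoliubovPhase ε ‖ξ‖ : ℝ)) * 𝓕 f ξ :=
    (continuous_cexp_bogoliubovPhase ε (t / ε)).mul (continuous_fourier f)
  rw [LP, Heps_eq]
  refine (fourier_fourierInv_eq_or_eq_zero hcont).imp (fun h ↦ by rw [h]) fun h ↦ ?_
  simp only [h, Pi.zero_apply, mul_zero]
  exact fourierInv_zero

theorem dispersive_2d_wave_general {α β : ℝ} (hα : 0 < α) (hαβ : α < β) {ψ : ℝ → ℝ}
    (hψ : Continuous ψ) (hψsupp : Function.support ψ ⊆ Icc α β) :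
    ∃ C > 0, ∀ ε : ℝ, 0 < ε → ∀ k : ℤ, ∀ t : ℝ, 0 < t → ∀ f : E2 → ℂ,
      eLpNorm (LP ψ k (Heps ε t f)) ⊤ volume ≤
        ENNReal.ofReal (C * (t / ε) ^ (-(1 : ℝ) / 2) * (2 : ℝ) ^ (3 * (k : ℝ) / 2)) *
          eLpNorm (LP ψ k f) 1 volume := by
  obtain ⟨χ, hχ, hχsupp, hχone⟩ :=
    exists_contDiff_support_subset_eq_one hαβ (half_pos hα) (n := 1)
  obtain ⟨C, hC, hkernel⟩ := exists_norm_fourierInv_bogoliubov_le (by linarith) (by linarith)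
    hχ hχsupp
  refine ⟨C, hC, fun ε hε k t ht f ↦ ?_⟩
  rcases LP_Heps_eq_or_eq_zero ψ k ε t f with h | h
  · have hrpow : (2 : ℝ) ^ (3 * (k : ℝ) / 2) = ((2 : ℝ) ^ k) ^ (3 / 2 : ℝ) := by
      rw [← Real.rpow_intCast, ← Real.rpow_mul zero_le_two]
      ring_nf
    rw [h, LP, zpow_neg, hrpow]
    exact eLpNorm_top_fourierInv_cutoff_mul_le (by positivity) hψ hχ.continuous
      (fun r hr ↦ (hχsupp hr).2.le) (fun r hr ↦ hχone r (hψsupp hr))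
      (continuous_cexp_bogoliubovPhase ε (t / ε)) (continuous_fourier f) (by positivity)
      (hkernel ε (t / ε) (div_pos ht hε) (2 ^ k) (by positivity))
  · simp [h]

end DispersiveEstimate

/-- **Wave-like dispersive estimate at low frequencies in 2D.** Below the frequency
threshold `ε⁻¹` (i.e. `2^k ε ≤ 1`), the frequency-localized propagator obeys
`‖P_{2^k}(e^{itH_ε} f)‖_{L^∞(ℝ²)} ≤ C (t/ε)^{-1/2} 2^{3k/2} ‖P_{2^k} f‖_{L¹(ℝ²)}`,
with `C` independent of `ε`, `t`, `k` and `f`. -/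
theorem dispersive_2d_wave
    (ψ : ℝ → ℝ) (hψ : ContDiff ℝ (⊤ : ℕ∞) ψ)
    (hψsupp : Function.support ψ ⊆ Set.Icc (1 / 2 : ℝ) 2)
    (hψsum : ∀ s : ℝ, 0 < s → ∑' k : ℤ, ψ ((2 : ℝ) ^ (-k) * s) = 1) :
    ∃ C > 0, ∀ ε : ℝ, 0 < ε → ∀ k : ℤ, (2 : ℝ) ^ k * ε ≤ 1 → ∀ t : ℝ, 0 < t →
      ∀ f : E2 → ℂ,
        eLpNorm (LP ψ k (Heps ε t f)) ⊤ volume ≤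
          ENNReal.ofReal (C * (t / ε) ^ (-(1 : ℝ) / 2) * (2 : ℝ) ^ (3 * (k : ℝ) / 2)) *
            eLpNorm (LP ψ k f) 1 volume := by
  obtain ⟨C, hC, h⟩ := dispersive_2d_wave_general one_half_pos (by norm_num) hψ.continuous hψsupp
  exact ⟨C, hC, fun ε hε k _ ↦ h ε hε k⟩
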